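/- Let v ∈ ℂ^m ⊗ ℂ^n be a unit vector with Schmidt coefficients α₁ ≥ α₂ ≥ … ≥ α_{min(m,n)} ≥ 0 and fix 1 ≤ k ≤ min(m,n). Let r be the largest index with 1 ≤ r < k such that α_r > (Σ_{i=r+1}^{min(m,n)} α_i)/(k−r), taking r = 0 if no such index exists, and set α̃ := (Σ_{i=r+1}^{min(m,n)} α_i)/(k−r). Then ‖|v⟩⟨v|‖_{γ,k} = Σ_{i=1}^r α_i² + (k−r)α̃². -/

import Mathlib

open scoped Kronecker ComplexOrder
open Matrix

namespace Ent

variable {ι κ : Type*} [Fintype ι] [Fintype κ]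

/-- Inner product ⟨v,w⟩ = Σᵢ conj(v i) * (w i) (conjugate-linear in the first argument). -/
noncomputable def vinner (v w : ι → ℂ) : ℂ := dotProduct (star v) w

/-- An elementary (product) tensor a ⊗ b in ℂ^ι ⊗ ℂ^κ. -/
def prodVec (a : ι → ℂ) (b : κ → ℂ) : ι × κ → ℂ := fun p => a p.1 * b p.2

/-- `v` has Schmidt rank at most `k`. -/
def SchmidtRankLE (k : ℕ) (v : ι × κ → ℂ) : Prop :=
  ∃ (a : Fin k → ι → ℂ) (b : Fin k → κ → ℂ), v = ∑ i, prodVec (a i) (b i)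

/-- The rank-one operator |v⟩⟨w|. -/
noncomputable def ketBra (v : ι → ℂ) (w : κ → ℂ) : Matrix ι κ ℂ :=
  Matrix.vecMulVec v (star w)

/-- A finite family of vectors is orthonormal. -/
def Orthonormal' {N : Type*} [DecidableEq N] (v : N → ι → ℂ) : Prop :=
  ∀ i j, vinner (v i) (v j) = if i = j then 1 else 0

/-- The S(k)-norm of `X ∈ M_ι ⊗ M_κ`. -/
noncomputable def SkNorm (k : ℕ) (X : Matrix (ι × κ) (ι × κ) ℂ) : ℝ :=
  sSup { r | ∃ v w : ι × κ → ℂ, vinner v v = 1 ∧ vinner w w = 1 ∧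
    SchmidtRankLE k v ∧ SchmidtRankLE k w ∧
    r = ‖vinner v (X.mulVec w)‖ }

/-- The product numerical radius r_k^⊗. -/
noncomputable def prodRad (k : ℕ) (Y : Matrix (ι × κ) (ι × κ) ℂ) : ℝ :=
  sSup { r | ∃ v : ι × κ → ℂ, vinner v v = 1 ∧ SchmidtRankLE k v ∧
    r = ‖vinner v (Y.mulVec v)‖ }

/-- The norm ‖·‖_{γ,k}. -/
noncomputable def gammaNorm (k : ℕ) (X : Matrix (ι × κ) (ι × κ) ℂ) : ℝ :=
  sInf { r | ∃ (N : ℕ) (c : Fin N → ℂ) (v w : Fin N → (ι × κ → ℂ)),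
    (∀ i, vinner (v i) (v i) = 1 ∧ vinner (w i) (w i) = 1 ∧
      SchmidtRankLE k (v i) ∧ SchmidtRankLE k (w i)) ∧
    X = ∑ i, c i • ketBra (v i) (w i) ∧
    r = ∑ i, ‖c i‖ }

/-- `ρ` is a density matrix. -/
def IsDensity (ρ : Matrix ι ι ℂ) : Prop := ρ.PosSemidef ∧ ρ.trace = 1

/-- `ρ` has Schmidt number at most `k`: it is a convex combination of projections onto
unit vectors of Schmidt rank at most `k`. -/
def SchmidtNumLE (k : ℕ) (ρ : Matrix (ι × κ) (ι × κ) ℂ) : Prop :=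
  ∃ (N : ℕ) (p : Fin N → ℝ) (v : Fin N → (ι × κ → ℂ)),
    (∀ i, 0 ≤ p i ∧ vinner (v i) (v i) = 1 ∧ SchmidtRankLE k (v i)) ∧
    (∑ i, p i) = 1 ∧ ρ = ∑ i, p i • ketBra (v i) (v i)

/-- The robustness norm R_k on Hermitian operators. -/
noncomputable def Rk (k : ℕ) (Y : Matrix (ι × κ) (ι × κ) ℂ) : ℝ :=
  sInf { r | ∃ (c₁ c₂ : ℝ) (ρ₁ ρ₂ : Matrix (ι × κ) (ι × κ) ℂ),
    0 ≤ c₁ ∧ 0 ≤ c₂ ∧ IsDensity ρ₁ ∧ IsDensity ρ₂ ∧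
    SchmidtNumLE k ρ₁ ∧ SchmidtNumLE k ρ₂ ∧
    Y = c₁ • ρ₁ - c₂ • ρ₂ ∧ r = c₁ + c₂ }

/-- `Y` is k-block positive: ⟨v|Y|v⟩ ≥ 0 for every unit vector of Schmidt rank at most `k`. -/
def KBlockPos (k : ℕ) (Y : Matrix (ι × κ) (ι × κ) ℂ) : Prop :=
  ∀ v : ι × κ → ℂ, vinner v v = 1 → SchmidtRankLE k v →
    0 ≤ (vinner v (Y.mulVec v)).re

/-- Dual of a norm on matrices, w.r.t. the Hilbert–Schmidt inner product ⟨W,X⟩ = Tr(Wᴴ X). -/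
noncomputable def dualNormM (f : Matrix ι κ ℂ → ℝ) (X : Matrix ι κ ℂ) : ℝ :=
  sSup { r | ∃ W : Matrix ι κ ℂ, f W ≤ 1 ∧ r = ‖(Wᴴ * X).trace‖ }

/-- Dual of a norm, computed in the real Hilbert space of Hermitian matrices with the
Hilbert–Schmidt inner product ⟨W,Y⟩ = Tr(WY). -/
noncomputable def dualNormHerm (f : Matrix ι ι ℂ → ℝ) (Y : Matrix ι ι ℂ) : ℝ :=
  sSup { r | ∃ W : Matrix ι ι ℂ, W.IsHermitian ∧ f W ≤ 1 ∧ r = |((W * Y).trace).re| }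

/-- The Frobenius norm of a matrix. -/
noncomputable def frobNorm (X : Matrix ι κ ℂ) : ℝ :=
  Real.sqrt (∑ i, ∑ j, Complex.normSq (X i j))

/-- The (k,2)-norm: ‖X‖_{(k,2)} = sup { |Tr(XY)| : rank Y ≤ k, ‖Y‖_F ≤ 1 }. -/
noncomputable def kNorm (k : ℕ) (X : Matrix ι κ ℂ) : ℝ :=
  sSup { r | ∃ Y : Matrix κ ι ℂ, Y.rank ≤ k ∧ frobNorm Y ≤ 1 ∧
    r = ‖(X * Y).trace‖ }

/-- The trace norm: the sum of the singular values, i.e. of the square roots of the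
eigenvalues of Xᴴ X. -/
noncomputable def traceNorm [DecidableEq κ] (X : Matrix ι κ ℂ) : ℝ :=
  ∑ i, Real.sqrt ((Matrix.isHermitian_conjTranspose_mul_self X).eigenvalues i)

/-- The s(k) vector norm: sup of |⟨u,w⟩| over unit vectors u of Schmidt rank at most k. -/
noncomputable def skVecNorm (k : ℕ) (w : ι × κ → ℂ) : ℝ :=
  sSup { r | ∃ u : ι × κ → ℂ, vinner u u = 1 ∧ SchmidtRankLE k u ∧
    r = ‖vinner u w‖ }

/-- Dual of a norm on vectors. -/
noncomputable def dualNormV (f : (ι × κ → ℂ) → ℝ) (v : ι × κ → ℂ) : ℝ :=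
  sSup { r | ∃ w : ι × κ → ℂ, f w ≤ 1 ∧ r = ‖vinner w v‖ }

/-- The realignment map, L(X)_{(i,k),(j,l)} = X_{(i,j),(k,l)}. -/
def realign {m n : ℕ} (X : Matrix (Fin m × Fin n) (Fin m × Fin n) ℂ) :
    Matrix (Fin m × Fin m) (Fin n × Fin n) ℂ :=
  fun p q => X (p.1, q.1) (p.2, q.2)

/-- The projective tensor norm on M_{m,n} ⊗ M_{m,n}. -/
noncomputable def projNorm {m n : ℕ} (Z : Matrix (Fin m × Fin m) (Fin n × Fin n) ℂ) : ℝ :=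
  sInf { r | ∃ (N : ℕ) (A B : Fin N → Matrix (Fin m) (Fin n) ℂ),
    Z = ∑ i, A i ⊗ₖ B i ∧ r = ∑ i, traceNorm (A i) * traceNorm (B i) }

/-!
Let `v = ∑ αᵢ aᵢ ⊗ bᵢ`. Choose the water level `t` with `∑ min (αᵢ, t) = k t` and put
`βᵢ = max (αᵢ, t)`, `pᵢ = αᵢ / βᵢ`; in the theorem `t` is the tail average `α̃`. Both bounds give
the value `V = ∑ αᵢ βᵢ = ∑ max (αᵢ² - t², 0) + k t²`.

For the upper bound, `p` lies in the polytope `{p ∈ [0,1]^N | ∑ p ≤ k}`, whose vertices are the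
indicators of sets of at most `k` indices. A convex combination `p = ∑ wₜ xₜ` of vertices splits `v`
into the vectors `wₜ ∑ xₜᵢ βᵢ aᵢ ⊗ bᵢ` of Schmidt rank at most `k`, hence
`‖|v⟩⟨v|‖ ≤ (∑ wₜ ‖∑ xₜᵢ βᵢ aᵢ ⊗ bᵢ‖)² ≤ ∑ wₜ ∑ xₜᵢ βᵢ² = ∑ pᵢ βᵢ² = V` by convexity of the square.

For the lower bound, test against `z = ∑ βᵢ aᵢ ⊗ bᵢ`: one has `⟨z, v⟩ = V`, and
`|⟨z, u⟩|² ≤ V` for every unit vector `u` of Schmidt rank at most `k`. Indeed `z` may be replaced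
there by its projection to `S ⊗ ℂ^κ` for some `S` of dimension at most `k`; the numbers `‖P_S aᵢ‖²`
again lie in the polytope, on which `∑ βᵢ² qᵢ` is at most `V`.
-/

/-! ### The capped cube -/

/-- The polytope `{p ∈ [0,1]^N | ∑ p ≤ k}`. Its points are the fractional choices of at most `k`
indices, and its vertices are the indicators of the sets of at most `k` indices. -/
def cappedCube (N : Type*) [Fintype N] (k : ℕ) : Set (N → ℝ) :=
  {p | (∀ i, p i ∈ Set.Icc 0 1) ∧ ∑ i, p i ≤ k}

theorem sum_eq_card_filter_eq_one {R N : Type*} [NonAssocSemiring R] [Nontrivial R]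
    [DecidableEq R] (s : Finset N) {x : N → R} (hx : ∀ i ∈ s, x i = 0 ∨ x i = 1) :
    ∑ i ∈ s, x i = (s.filter fun i => x i = 1).card := by
  rw [Finset.card_filter, Nat.cast_sum]
  refine Finset.sum_congr rfl fun i hi => ?_
  rcases hx i hi with h | h <;> simp [h]

theorem eq_zero_of_add_mem_of_sub_mem_of_mem_extremePoints {𝕜 E : Type*} [Field 𝕜]
    [LinearOrder 𝕜] [IsStrictOrderedRing 𝕜] [AddCommGroup E] [Module 𝕜 E] {s : Set E} {x y : E}
    (hx : x ∈ s.extremePoints 𝕜) (hadd : x + y ∈ s) (hsub : x - y ∈ s) : y = 0 := by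
  have hmid : x ∈ openSegment 𝕜 (x + y) (x - y) :=
    ⟨1 / 2, 1 / 2, by norm_num, by norm_num, by norm_num, by module⟩
  simpa using hx.2 hadd hsub hmid

section CappedCube

variable {N : Type*} [Fintype N] {k : ℕ}

theorem convex_cappedCube : Convex ℝ (cappedCube N k) := by
  have hbox : Convex ℝ {p : N → ℝ | ∀ i, p i ∈ Set.Icc 0 1} := by
    simpa [Set.pi] using convex_pi (𝕜 := ℝ) (s := Set.univ) fun (i : N) _ => convex_Icc (0 : ℝ) 1
  have hcap : Convex ℝ {p : N → ℝ | ∑ i, p i ≤ k} :=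
    convex_halfSpace_le ⟨fun p q => Finset.sum_add_distrib, fun c p => (Finset.mul_sum ..).symm⟩ _
  exact hbox.inter hcap

theorem isCompact_cappedCube : IsCompact (cappedCube N k) := by
  have hbox : IsCompact {p : N → ℝ | ∀ i, p i ∈ Set.Icc 0 1} :=
    isCompact_pi_infinite fun _ => isCompact_Icc
  have hcap : IsClosed {p : N → ℝ | ∑ i, p i ≤ k} := isClosed_le (by fun_prop) continuous_const
  exact hbox.inter_right hcap

theorem eventually_add_smul_mem_cappedCube {p d : N → ℝ} (hp : p ∈ cappedCube N k)
    (hd : ∀ i, d i ≠ 0 → p i ∈ Set.Ioo 0 1) (hsum : ∑ i, d i = 0 ∨ ∑ i, p i < k) :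
    ∀ᶠ ε in nhds (0 : ℝ), p + ε • d ∈ cappedCube N k := by
  have hbox : ∀ᶠ ε in nhds (0 : ℝ), ∀ i, (p + ε • d) i ∈ Set.Icc (0 : ℝ) 1 := by
    refine Filter.eventually_all.2 fun i => ?_
    by_cases hi : d i = 0
    · simpa [hi] using hp.1 i
    · have hlim : Filter.Tendsto (fun ε : ℝ => (p + ε • d) i) (nhds 0) (nhds (p i)) :=
        Continuous.tendsto' (by simp only [Pi.add_apply, Pi.smul_apply]; fun_prop) _ _ (by simp)
      exact hlim (Icc_mem_nhds (hd i hi).1 (hd i hi).2)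
  have hcap : ∀ᶠ ε in nhds (0 : ℝ), ∑ i, (p + ε • d) i ≤ k := by
    simp only [Pi.add_apply, Pi.smul_apply, smul_eq_mul, Finset.sum_add_distrib, ← Finset.mul_sum]
    rcases hsum with hsum | hsum
    · simpa [hsum] using hp.2
    · have hlim : Filter.Tendsto (fun ε : ℝ => ∑ i, p i + ε * ∑ i, d i) (nhds 0)
          (nhds (∑ i, p i)) := Continuous.tendsto' (by fun_prop) _ _ (by simp)
      exact hlim (Iic_mem_nhds hsum)
  exact hbox.and hcap

theorem eq_zero_of_mem_extremePoints_cappedCube {p d : N → ℝ}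
    (hp : p ∈ (cappedCube N k).extremePoints ℝ) (hd : ∀ i, d i ≠ 0 → p i ∈ Set.Ioo 0 1)
    (hsum : ∑ i, d i = 0 ∨ ∑ i, p i < k) : d = 0 := by
  have hadd := eventually_add_smul_mem_cappedCube hp.1 hd hsum
  have hsub : ∀ᶠ ε in nhds (0 : ℝ), p - ε • d ∈ cappedCube N k := by
    have hneg : Filter.Tendsto (fun ε : ℝ => -ε) (nhds 0) (nhds 0) :=
      continuous_neg.tendsto' 0 0 neg_zero
    simpa [sub_eq_add_neg] using hneg.eventually hadd
  obtain ⟨ε, ⟨hεadd, hεsub⟩, hε⟩ :=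
    (((hadd.and hsub).filter_mono nhdsWithin_le_nhds).and
      (self_mem_nhdsWithin (s := {(0 : ℝ)}ᶜ))).exists
  exact (smul_eq_zero.1
    (eq_zero_of_add_mem_of_sub_mem_of_mem_extremePoints hp hεadd hεsub)).resolve_left hε

theorem sum_lt_of_mem_cappedCube_of_mem_Ioo {p : N → ℝ} (hp : p ∈ cappedCube N k) {i : N}
    (hi : p i ∈ Set.Ioo 0 1) (hne : ∀ j ≠ i, p j = 0 ∨ p j = 1) : ∑ j, p j < k := by
  classical
  have hsum : ∑ j, p j = p i + ((Finset.univ.erase i).filter fun j => p j = 1).card := by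
    rw [← Finset.add_sum_erase _ _ (Finset.mem_univ i),
      sum_eq_card_filter_eq_one _ fun j hj => hne j (Finset.ne_of_mem_erase hj)]
  have hle := hp.2
  rw [hsum] at hle ⊢
  have hcard : ((Finset.univ.erase i).filter fun j => p j = 1).card + 1 ≤ k := by
    exact_mod_cast (lt_add_of_pos_left _ hi.1).trans_le hle
  have hcard_real : (((Finset.univ.erase i).filter fun j => p j = 1).card : ℝ) + 1 ≤ k := by
    exact_mod_cast hcard
  linarith [hi.2]

theorem eq_zero_or_eq_one_of_mem_extremePoints_cappedCube {p : N → ℝ}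
    (hp : p ∈ (cappedCube N k).extremePoints ℝ) (i : N) : p i = 0 ∨ p i = 1 := by
  classical
  by_contra! hi
  have hfrac {j : N} (h0 : p j ≠ 0) (h1 : p j ≠ 1) : p j ∈ Set.Ioo 0 1 :=
    ⟨(hp.1.1 j).1.lt_of_ne' h0, (hp.1.1 j).2.lt_of_ne h1⟩
  have hpi := hfrac hi.1 hi.2
  by_cases hother : ∃ j ≠ i, p j ≠ 0 ∧ p j ≠ 1
  · obtain ⟨j, hji, h0, h1⟩ := hother
    have hd := eq_zero_of_mem_extremePoints_cappedCube (d := Pi.single i 1 - Pi.single j 1) hp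
      (fun l hl => by
        by_cases hli : l = i
        · exact hli ▸ hpi
        · by_cases hlj : l = j
          · exact hlj ▸ hfrac h0 h1
          · simp [hli, hlj] at hl)
      (.inl (by simp))
    simpa [hji.symm] using congrFun hd i
  · push Not at hother
    have hlt : ∑ j, p j < k := sum_lt_of_mem_cappedCube_of_mem_Ioo hp.1 hpi fun j hj =>
      or_iff_not_imp_left.2 (hother j hj)
    have hd := eq_zero_of_mem_extremePoints_cappedCube (d := Pi.single i 1) hp
      (fun l hl => by
        by_cases hli : l = i
        · exact hli ▸ hpi
        · simp [hli] at hl)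
      (.inr hlt)
    simpa using congrFun hd i

theorem mem_convexHull_zero_one_of_mem_cappedCube {p : N → ℝ} (hp : p ∈ cappedCube N k) :
    p ∈ convexHull ℝ {x ∈ cappedCube N k | ∀ i, x i = 0 ∨ x i = 1} := by
  have hfin : {x ∈ cappedCube N k | ∀ i, x i = 0 ∨ x i = 1}.Finite :=
    (Set.Finite.pi' fun _ : N => Set.toFinite {(0 : ℝ), 1}).subset fun x hx => hx.2
  have hext : (cappedCube N k).extremePoints ℝ ⊆ {x ∈ cappedCube N k | ∀ i, x i = 0 ∨ x i = 1} :=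
    fun x hx => ⟨hx.1, eq_zero_or_eq_one_of_mem_extremePoints_cappedCube hx⟩
  rw [← closure_convexHull_extremePoints isCompact_cappedCube convex_cappedCube] at hp
  exact closure_minimal (convexHull_mono hext) (hfin.isClosed_convexHull ℝ) hp

theorem sum_mul_le_of_mem_cappedCube {q : N → ℝ} (hq : q ∈ cappedCube N k) (c : N → ℝ) {τ : ℝ}
    (hτ : 0 ≤ τ) : ∑ i, c i * q i ≤ ∑ i, max (c i - τ) 0 + k * τ := by
  have hterm (i : N) : c i * q i ≤ max (c i - τ) 0 + q i * τ := by
    obtain ⟨h0, h1⟩ := hq.1 i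
    rcases le_total (c i - τ) 0 with h | h
    · rw [max_eq_right h]; nlinarith
    · rw [max_eq_left h]; nlinarith
  calc ∑ i, c i * q i ≤ ∑ i, max (c i - τ) 0 + (∑ i, q i) * τ := by
        rw [Finset.sum_mul, ← Finset.sum_add_distrib]
        exact Finset.sum_le_sum fun i _ => hterm i
    _ ≤ ∑ i, max (c i - τ) 0 + k * τ := by gcongr; exact hq.2

end CappedCube

/-! ### Vectors and their Schmidt rank -/

theorem sum_norm_sq_starProjection_le_finrank {𝕜 E N : Type*} [RCLike 𝕜] [NormedAddCommGroup E]
    [InnerProductSpace 𝕜 E] [Fintype N] {e : N → E} (he : Orthonormal 𝕜 e) (S : Submodule 𝕜 E)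
    [FiniteDimensional 𝕜 S] : ∑ i, ‖S.starProjection (e i)‖ ^ 2 ≤ Module.finrank 𝕜 S := by
  let f := stdOrthonormalBasis 𝕜 S
  have hnorm (x : E) : ‖S.starProjection x‖ ^ 2 = ∑ j, ‖inner 𝕜 x (f j : E)‖ ^ 2 := by
    rw [S.starProjection_apply, ← Submodule.coe_norm, ← f.sum_sq_norm_inner_left]
    simp only [Submodule.inner_orthogonalProjectionOnto_eq_of_mem_right]
  calc ∑ i, ‖S.starProjection (e i)‖ ^ 2 = ∑ j, ∑ i, ‖inner 𝕜 (e i) (f j : E)‖ ^ 2 := by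
        simp only [hnorm]
        exact Finset.sum_comm
    _ ≤ ∑ j, ‖(f j : E)‖ ^ 2 :=
        Finset.sum_le_sum fun j _ => he.sum_inner_products_le (f j : E)
    _ = Module.finrank 𝕜 S := by
        simp [show ∀ j, ‖(f j : E)‖ = 1 from f.orthonormal.1]

theorem vinner_eq_inner (v w : ι → ℂ) :
    vinner v w = inner ℂ (WithLp.toLp 2 v) (WithLp.toLp 2 w) := by
  rw [EuclideanSpace.inner_toLp_toLp, vinner, dotProduct_comm]

theorem vinner_self (v : ι → ℂ) : vinner v v = ((‖WithLp.toLp 2 v‖ ^ 2 : ℝ) : ℂ) := by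
  rw [vinner_eq_inner, inner_self_eq_norm_sq_to_K]
  simp

theorem vinner_self_eq_one_iff {v : ι → ℂ} : vinner v v = 1 ↔ ‖WithLp.toLp 2 v‖ = 1 := by
  rw [vinner_self, Complex.ofReal_eq_one,
    pow_eq_one_iff_of_nonneg (norm_nonneg _) two_ne_zero]

theorem norm_vinner_le (v w : ι → ℂ) :
    ‖vinner v w‖ ≤ ‖WithLp.toLp 2 v‖ * ‖WithLp.toLp 2 w‖ := by
  rw [vinner_eq_inner]
  exact norm_inner_le_norm _ _

theorem norm_vinner_comm (v w : ι → ℂ) : ‖vinner v w‖ = ‖vinner w v‖ := by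
  rw [vinner_eq_inner, vinner_eq_inner, norm_inner_symm]

theorem vinner_sum_left {T : Type*} (s : Finset T) (f : T → ι → ℂ) (w : ι → ℂ) :
    vinner (∑ t ∈ s, f t) w = ∑ t ∈ s, vinner (f t) w := by
  simp only [vinner, star_sum, sum_dotProduct]

theorem vinner_sum_right {T : Type*} (s : Finset T) (w : ι → ℂ) (f : T → ι → ℂ) :
    vinner w (∑ t ∈ s, f t) = ∑ t ∈ s, vinner w (f t) := by
  simp only [vinner, dotProduct_sum]

theorem vinner_smul_right (c : ℂ) (v w : ι → ℂ) : vinner v (c • w) = c * vinner v w :=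
  dotProduct_smul c (star v) w

theorem vinner_real_smul_left (c : ℝ) (v w : ι → ℂ) : vinner (c • v) w = c * vinner v w := by
  simp [vinner, smul_dotProduct]

theorem vinner_real_smul_right (c : ℝ) (v w : ι → ℂ) : vinner v (c • w) = c * vinner v w := by
  simp [vinner, dotProduct_smul]

theorem vinner_prodVec (a c : ι → ℂ) (b d : κ → ℂ) :
    vinner (prodVec a b) (prodVec c d) = vinner a c * vinner b d := by
  simp only [vinner, dotProduct, Fintype.sum_prod_type, Finset.sum_mul_sum]
  refine Finset.sum_congr rfl fun i _ => Finset.sum_congr rfl fun j _ => ?_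
  simp only [prodVec, Pi.star_apply, star_mul']
  ring

theorem vinner_ketBra_mulVec (z x : ι → ℂ) (y w : κ → ℂ) :
    vinner z (ketBra x y *ᵥ w) = vinner z x * vinner y w := by
  simp [vinner, ketBra, vecMulVec_mulVec, dotProduct_smul, mul_comm]

theorem orthonormal_toLp_iff {N : Type*} [DecidableEq N] {e : N → ι → ℂ} :
    Orthonormal ℂ (fun i => WithLp.toLp 2 (e i)) ↔ Orthonormal' e := by
  simp only [orthonormal_iff_ite, Orthonormal', vinner_eq_inner]

theorem Orthonormal'.norm_toLp {N : Type*} [DecidableEq N] {e : N → ι → ℂ} (he : Orthonormal' e)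
    (i : N) : ‖WithLp.toLp 2 (e i)‖ = 1 :=
  (orthonormal_toLp_iff.2 he).1 i

theorem smul_prodVec {ι κ : Type*} (c : ℝ) (a : ι → ℂ) (b : κ → ℂ) :
    c • prodVec a b = prodVec (c • a) b := by
  ext p
  simp [prodVec, mul_assoc]

theorem SchmidtRankLE.smul {ι κ : Type*} {k : ℕ} {u : ι × κ → ℂ} (hu : SchmidtRankLE k u) (c : ℝ) :
    SchmidtRankLE k (c • u) := by
  obtain ⟨a, b, rfl⟩ := hu
  exact ⟨fun i => c • a i, b, by simp only [Finset.smul_sum, smul_prodVec]⟩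

theorem schmidtRankLE_sum_prodVec {ι κ N : Type*} {k : ℕ} {s : Finset N}
    (hs : s.card ≤ k) (a : N → ι → ℂ) (b : N → κ → ℂ) :
    SchmidtRankLE k (∑ i ∈ s, prodVec (a i) (b i)) := by
  obtain ⟨f⟩ : Nonempty (s ↪ Fin k) := Function.Embedding.nonempty_of_card_le (by simpa using hs)
  refine ⟨Function.extend f (fun i => a i) 0, Function.extend f (fun i => b i) 0, ?_⟩
  rw [← Finset.sum_coe_sort]
  refine Fintype.sum_of_injective f f.injective _ _ (fun j hj => ?_) fun i => ?_
  · ext p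
    simp [prodVec, Function.extend_apply' _ _ _ hj]
  · simp [f.injective.extend_apply]

theorem schmidtRankLE_prodVec {ι κ : Type*} {k : ℕ} (hk : 1 ≤ k) (a : ι → ℂ) (b : κ → ℂ) :
    SchmidtRankLE k (prodVec a b) := by
  simpa using schmidtRankLE_sum_prodVec (s := {()}) (by simpa using hk) (fun _ => a) fun _ => b

section SchmidtVec

variable {N : Type*} [Fintype N]

/-- The vector `∑ i, α i • a i ⊗ b i` as a linear function of the coefficients `α`. When `a` and `b`
are orthonormal and `α ≥ 0`, it is the vector with this Schmidt decomposition. -/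
noncomputable def schmidtVec {ι κ : Type*} (a : N → ι → ℂ) (b : N → κ → ℂ) :
    (N → ℝ) →ₗ[ℝ] (ι × κ → ℂ) :=
  Fintype.linearCombination ℝ fun i => prodVec (a i) (b i)

theorem schmidtVec_apply {ι κ : Type*} (a : N → ι → ℂ) (b : N → κ → ℂ) (α : N → ℝ) :
    schmidtVec a b α = ∑ i, α i • prodVec (a i) (b i) :=
  Fintype.linearCombination_apply ..

theorem schmidtRankLE_schmidtVec_mul {ι κ : Type*} {k : ℕ} (a : N → ι → ℂ) (b : N → κ → ℂ)
    {x : N → ℝ} (hx : x ∈ cappedCube N k) (hx01 : ∀ i, x i = 0 ∨ x i = 1) (β : N → ℝ) :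
    SchmidtRankLE k (schmidtVec a b (x * β)) := by
  classical
  have hcard : (Finset.univ.filter fun i => x i = 1).card ≤ k := by
    have hle := hx.2
    rw [sum_eq_card_filter_eq_one _ fun i _ => hx01 i] at hle
    exact_mod_cast hle
  have hsupp : schmidtVec a b (x * β)
      = ∑ i ∈ Finset.univ.filter (fun i => x i = 1), prodVec (β i • a i) (b i) := by
    rw [schmidtVec_apply, Finset.sum_filter]
    refine Finset.sum_congr rfl fun i _ => ?_
    rcases hx01 i with h | h <;> simp [h, smul_prodVec]
  exact hsupp ▸ schmidtRankLE_sum_prodVec hcard _ _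

variable [DecidableEq N]

theorem vinner_schmidtVec (a c : N → ι → ℂ) {b : N → κ → ℂ} (hb : Orthonormal' b) (α β : N → ℝ) :
    vinner (schmidtVec a b α) (schmidtVec c b β) = ∑ i, α i * β i * vinner (a i) (c i) := by
  simp only [schmidtVec_apply, vinner_sum_left, vinner_sum_right, vinner_real_smul_left,
    vinner_real_smul_right, vinner_prodVec, hb _ _]
  simp [mul_assoc, mul_left_comm]

theorem norm_sq_schmidtVec (a : N → ι → ℂ) {b : N → κ → ℂ} (hb : Orthonormal' b) (α : N → ℝ) :
    ‖WithLp.toLp 2 (schmidtVec a b α)‖ ^ 2 = ∑ i, α i ^ 2 * ‖WithLp.toLp 2 (a i)‖ ^ 2 := by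
  have h := vinner_schmidtVec a a hb α α
  simp only [vinner_self, ← sq] at h
  exact_mod_cast h

theorem exists_vinner_eq_and_norm_sq_mem_cappedCube {k : ℕ} {a : N → ι → ℂ}
    (ha : Orthonormal' a) (x : Fin k → ι → ℂ) :
    ∃ c : N → ι → ℂ, (∀ i j, vinner (c i) (x j) = vinner (a i) (x j)) ∧
      (fun i => ‖WithLp.toLp 2 (c i)‖ ^ 2) ∈ cappedCube N k := by
  let S := Submodule.span ℂ (Set.range fun j => WithLp.toLp 2 (x j))
  have hrank : Module.finrank ℂ S ≤ k := by
    simpa [Set.finrank] using finrank_range_le_card (R := ℂ) fun j => WithLp.toLp 2 (x j)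
  refine ⟨fun i => (S.starProjection (WithLp.toLp 2 (a i))).ofLp, fun i j => ?_, fun i => ?_, ?_⟩
  · have hmem : WithLp.toLp 2 (x j) ∈ S := Submodule.subset_span ⟨j, rfl⟩
    rw [vinner_eq_inner, vinner_eq_inner, WithLp.toLp_ofLp,
      Submodule.inner_starProjection_left_eq_right, Submodule.starProjection_eq_self_iff.2 hmem]
  · refine ⟨by positivity, pow_le_one₀ (norm_nonneg _) ?_⟩
    exact (S.norm_starProjection_apply_le _).trans_eq (ha.norm_toLp i)
  · exact (sum_norm_sq_starProjection_le_finrank (orthonormal_toLp_iff.2 ha) S).trans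
      (by exact_mod_cast hrank)

theorem exists_mem_cappedCube_norm_vinner_sq_le {k : ℕ} {a : N → ι → ℂ} {b : N → κ → ℂ}
    (ha : Orthonormal' a) (hb : Orthonormal' b) (β : N → ℝ) {u : ι × κ → ℂ}
    (hu : SchmidtRankLE k u) :
    ∃ q ∈ cappedCube N k,
      ‖vinner (schmidtVec a b β) u‖ ^ 2 ≤ (∑ i, β i ^ 2 * q i) * ‖WithLp.toLp 2 u‖ ^ 2 := by
  obtain ⟨x, y, rfl⟩ := hu
  obtain ⟨c, hc, hq⟩ := exists_vinner_eq_and_norm_sq_mem_cappedCube ha x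
  refine ⟨_, hq, ?_⟩
  have hproj : vinner (schmidtVec a b β) (∑ j, prodVec (x j) (y j))
      = vinner (schmidtVec c b β) (∑ j, prodVec (x j) (y j)) := by
    simp only [schmidtVec_apply, vinner_sum_left, vinner_sum_right, vinner_real_smul_left,
      vinner_prodVec, hc]
  rw [hproj, ← norm_sq_schmidtVec c hb, ← mul_pow]
  gcongr
  exact norm_vinner_le _ _

end SchmidtVec

/-! ### Upper and lower bounds for the norm -/

theorem norm_vinner_le_skVecNorm {k : ℕ} {u : ι × κ → ℂ} (hu : vinner u u = 1)
    (hk : SchmidtRankLE k u) (w : ι × κ → ℂ) : ‖vinner u w‖ ≤ skVecNorm k w := by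
  refine le_csSup ⟨‖WithLp.toLp 2 w‖, ?_⟩ ⟨u, hu, hk, rfl⟩
  rintro _ ⟨u', hu', -, rfl⟩
  simpa [vinner_self_eq_one_iff.1 hu'] using norm_vinner_le u' w

theorem skVecNorm_nonneg (k : ℕ) (w : ι × κ → ℂ) : 0 ≤ skVecNorm k w :=
  Real.sSup_nonneg (by rintro _ ⟨u, -, -, rfl⟩; exact norm_nonneg _)

theorem skVecNorm_schmidtVec_sq_le {N : Type*} [Fintype N] [DecidableEq N] {a : N → ι → ℂ}
    {b : N → κ → ℂ} (ha : Orthonormal' a) (hb : Orthonormal' b) (k : ℕ) (β : N → ℝ) {τ : ℝ}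
    (hτ : 0 ≤ τ) :
    skVecNorm k (schmidtVec a b β) ^ 2 ≤ ∑ i, max (β i ^ 2 - τ) 0 + k * τ := by
  have hbound : 0 ≤ ∑ i, max (β i ^ 2 - τ) 0 + k * τ := by positivity
  refine (Real.le_sqrt (skVecNorm_nonneg _ _) hbound).1 (Real.sSup_le ?_ (Real.sqrt_nonneg _))
  rintro _ ⟨u, hu, hk, rfl⟩
  obtain ⟨q, hq, hle⟩ := exists_mem_cappedCube_norm_vinner_sq_le ha hb β hk
  rw [vinner_self_eq_one_iff.1 hu, one_pow, mul_one] at hle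
  rw [norm_vinner_comm]
  exact Real.le_sqrt_of_sq_le (hle.trans (sum_mul_le_of_mem_cappedCube hq _ hτ))

/-- The totals `∑ |cᵢ|` whose infimum is `‖X‖_{γ,k}`, one for each decomposition
`X = ∑ cᵢ |vᵢ⟩⟨wᵢ|` into unit vectors of Schmidt rank at most `k`. -/
def gammaCosts (k : ℕ) (X : Matrix (ι × κ) (ι × κ) ℂ) : Set ℝ :=
  {r | ∃ (N : ℕ) (c : Fin N → ℂ) (v w : Fin N → (ι × κ → ℂ)),
    (∀ i, vinner (v i) (v i) = 1 ∧ vinner (w i) (w i) = 1 ∧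
      SchmidtRankLE k (v i) ∧ SchmidtRankLE k (w i)) ∧
    X = ∑ i, c i • ketBra (v i) (w i) ∧ r = ∑ i, ‖c i‖}

theorem gammaNorm_eq_sInf (k : ℕ) (X : Matrix (ι × κ) (ι × κ) ℂ) :
    gammaNorm k X = sInf (gammaCosts k X) :=
  rfl

theorem nonneg_of_mem_gammaCosts {k : ℕ} {X : Matrix (ι × κ) (ι × κ) ℂ} {r : ℝ}
    (hr : r ∈ gammaCosts k X) : 0 ≤ r := by
  obtain ⟨N, c, v, w, -, -, rfl⟩ := hr
  positivity

theorem bddBelow_gammaCosts (k : ℕ) (X : Matrix (ι × κ) (ι × κ) ℂ) :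
    BddBelow (gammaCosts k X) :=
  ⟨0, fun _ => nonneg_of_mem_gammaCosts⟩

theorem gammaNorm_nonneg (k : ℕ) (X : Matrix (ι × κ) (ι × κ) ℂ) : 0 ≤ gammaNorm k X :=
  Real.sInf_nonneg fun _ => nonneg_of_mem_gammaCosts

theorem ketBra_real_smul_smul {ι κ : Type*} (c d : ℝ) (x : ι → ℂ) (y : κ → ℂ) :
    ketBra (c • x) (d • y) = (c * d : ℂ) • ketBra x y := by
  ext p q
  simp only [ketBra, vecMulVec_apply, Pi.smul_apply, Pi.star_apply, star_smul, Matrix.smul_apply,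
    Complex.real_smul, smul_eq_mul, star_trivial]
  ring

theorem ketBra_sum_sum {ι T : Type*} [Fintype T] (u : T → ι → ℂ) :
    ketBra (∑ t, u t) (∑ t, u t) = ∑ p : T × T, ketBra (u p.1) (u p.2) := by
  ext i j
  simp [ketBra, vecMulVec_apply, Matrix.sum_apply, Finset.sum_mul_sum, Fintype.sum_prod_type]

theorem ketBra_single_single {ι κ : Type*} [DecidableEq ι] [DecidableEq κ] (i : ι) (j : κ)
    (c : ℂ) : ketBra (Pi.single i c) (Pi.single j 1) = Matrix.single i j c := by
  ext p q
  by_cases hi : p = i <;> by_cases hj : q = j <;>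
    simp [ketBra, vecMulVec_apply, hi, hj, Ne.symm]

theorem prodVec_single_single {ι κ : Type*} [DecidableEq ι] [DecidableEq κ] (p : ι × κ) (c : ℂ) :
    prodVec (Pi.single p.1 c) (Pi.single p.2 1) = Pi.single p c := by
  ext q
  simp only [prodVec, Pi.single_apply, Prod.ext_iff]
  split_ifs <;> simp_all

section GammaCosts

variable {T : Type*} [Fintype T] {k : ℕ}

theorem sum_norm_mem_gammaCosts {c : T → ℂ} {v w : T → ι × κ → ℂ}
    (h : ∀ t, vinner (v t) (v t) = 1 ∧ vinner (w t) (w t) = 1 ∧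
      SchmidtRankLE k (v t) ∧ SchmidtRankLE k (w t)) :
    ∑ t, ‖c t‖ ∈ gammaCosts k (∑ t, c t • ketBra (v t) (w t)) := by
  let e := (Fintype.equivFin T).symm
  exact ⟨Fintype.card T, c ∘ e, v ∘ e, w ∘ e, fun i => h (e i),
    (e.sum_comp fun t => c t • ketBra (v t) (w t)).symm, (e.sum_comp fun t => ‖c t‖).symm⟩

theorem sum_norm_mul_norm_mem_gammaCosts {x y : T → ι × κ → ℂ} (hx : ∀ t, SchmidtRankLE k (x t))
    (hy : ∀ t, SchmidtRankLE k (y t)) :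
    ∑ t, ‖WithLp.toLp 2 (x t)‖ * ‖WithLp.toLp 2 (y t)‖ ∈
      gammaCosts k (∑ t, ketBra (x t) (y t)) := by
  classical
  let s := Finset.univ.filter fun t => x t ≠ 0 ∧ y t ≠ 0
  let unit (u : ι × κ → ℂ) : ι × κ → ℂ := ‖WithLp.toLp 2 u‖⁻¹ • u
  have hunit {u : ι × κ → ℂ} (hu : u ≠ 0) : vinner (unit u) (unit u) = 1 := by
    rw [vinner_self_eq_one_iff, WithLp.toLp_smul, norm_smul, norm_inv, norm_norm,
      inv_mul_cancel₀ (by simpa using hu)]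
  have hsmul {u : ι × κ → ℂ} (hu : u ≠ 0) : ‖WithLp.toLp 2 u‖ • unit u = u :=
    smul_inv_smul₀ (by simpa using hu) u
  have hs (t : s) : x t ≠ 0 ∧ y t ≠ 0 := (Finset.mem_filter.1 t.2).2
  have hcost := sum_norm_mem_gammaCosts (k := k) (T := s)
    (c := fun t => ‖WithLp.toLp 2 (x t)‖ * ‖WithLp.toLp 2 (y t)‖)
    (v := fun t => unit (x t)) (w := fun t => unit (y t)) fun t =>
      ⟨hunit (hs t).1, hunit (hs t).2, (hx t).smul _, (hy t).smul _⟩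
  simp only [← ketBra_real_smul_smul, hsmul (hs _).1, hsmul (hs _).2, norm_mul, Complex.norm_real,
    norm_norm] at hcost
  rw [Finset.sum_coe_sort s fun t => ketBra (x t) (y t),
    Finset.sum_coe_sort s fun t => ‖WithLp.toLp 2 (x t)‖ * ‖WithLp.toLp 2 (y t)‖,
    Finset.sum_filter_of_ne, Finset.sum_filter_of_ne] at hcost
  · exact hcost
  · intro t _ ht
    constructor <;> intro h <;> simp [h] at ht
  · intro t _ ht
    constructor <;> intro h <;> simp [h, ketBra] at ht

theorem gammaNorm_ketBra_sum_le {u : T → ι × κ → ℂ} (hu : ∀ t, SchmidtRankLE k (u t)) :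
    gammaNorm k (ketBra (∑ t, u t) (∑ t, u t)) ≤ (∑ t, ‖WithLp.toLp 2 (u t)‖) ^ 2 := by
  rw [gammaNorm_eq_sInf, ketBra_sum_sum, sq, Finset.sum_mul_sum, ← Fintype.sum_prod_type']
  exact csInf_le (bddBelow_gammaCosts k _) <|
    sum_norm_mul_norm_mem_gammaCosts (fun p => hu p.1) fun p => hu p.2

theorem gammaCosts_nonempty (hk : 1 ≤ k) (X : Matrix (ι × κ) (ι × κ) ℂ) :
    (gammaCosts k X).Nonempty := by
  classical
  have hX : X = ∑ p : (ι × κ) × (ι × κ), ketBra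
      (prodVec (Pi.single p.1.1 (X p.1 p.2)) (Pi.single p.1.2 1))
      (prodVec (Pi.single p.2.1 1) (Pi.single p.2.2 1)) := by
    simp only [prodVec_single_single, ketBra_single_single]
    rw [Fintype.sum_prod_type]
    exact matrix_eq_sum_single X
  rw [hX]
  exact ⟨_, sum_norm_mul_norm_mem_gammaCosts (fun _ => schmidtRankLE_prodVec hk _ _) fun _ =>
    schmidtRankLE_prodVec hk _ _⟩

theorem norm_vinner_mulVec_le_of_mem_gammaCosts {X : Matrix (ι × κ) (ι × κ) ℂ} {r : ℝ}
    (hr : r ∈ gammaCosts k X) (z w : ι × κ → ℂ) :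
    ‖vinner z (X *ᵥ w)‖ ≤ r * (skVecNorm k z * skVecNorm k w) := by
  obtain ⟨N, c, x, y, hxy, rfl, rfl⟩ := hr
  rw [Matrix.sum_mulVec, vinner_sum_right, Finset.sum_mul]
  refine norm_sum_le_of_le _ fun i _ => ?_
  obtain ⟨hx, hy, hkx, hky⟩ := hxy i
  rw [Matrix.smul_mulVec, vinner_smul_right, vinner_ketBra_mulVec, norm_mul, norm_mul,
    norm_vinner_comm z]
  gcongr
  · exact skVecNorm_nonneg k z
  · exact norm_vinner_le_skVecNorm hx hkx z
  · exact norm_vinner_le_skVecNorm hy hky w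

theorem norm_vinner_mulVec_le_gammaNorm (hk : 1 ≤ k) (X : Matrix (ι × κ) (ι × κ) ℂ)
    (z w : ι × κ → ℂ) :
    ‖vinner z (X *ᵥ w)‖ ≤ gammaNorm k X * (skVecNorm k z * skVecNorm k w) := by
  have hcosts {r : ℝ} (hr : r ∈ gammaCosts k X) := norm_vinner_mulVec_le_of_mem_gammaCosts hr z w
  have hne := gammaCosts_nonempty hk X
  rcases (mul_nonneg (skVecNorm_nonneg k z) (skVecNorm_nonneg k w)).eq_or_lt with h0 | hpos
  · simpa [← h0] using hcosts hne.some_mem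
  · rw [← div_le_iff₀ hpos]
    exact le_csInf hne fun r hr => (div_le_iff₀ hpos).2 (hcosts hr)

theorem norm_vinner_sq_le_gammaNorm_ketBra (hk : 1 ≤ k) (v z : ι × κ → ℂ) :
    ‖vinner z v‖ ^ 2 ≤ gammaNorm k (ketBra v v) * skVecNorm k z ^ 2 := by
  have h := norm_vinner_mulVec_le_gammaNorm hk (ketBra v v) z z
  rwa [vinner_ketBra_mulVec, norm_mul, norm_vinner_comm v z, ← sq, ← sq] at h

end GammaCosts

/-! ### The water level -/

section WaterLevel

variable {N : Type*} [Fintype N] [DecidableEq N] {k : ℕ} {a : N → ι → ℂ} {b : N → κ → ℂ}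

theorem gammaNorm_ketBra_schmidtVec_mul_le (ha : Orthonormal' a) (hb : Orthonormal' b)
    {p : N → ℝ} (hp : p ∈ cappedCube N k) (β : N → ℝ) :
    gammaNorm k (ketBra (schmidtVec a b (p * β)) (schmidtVec a b (p * β)))
      ≤ ∑ i, p i * β i ^ 2 := by
  obtain ⟨T, _, w, x, hw0, hw1, hx, rfl⟩ :=
    mem_convexHull_iff_exists_fintype.1 (mem_convexHull_zero_one_of_mem_cappedCube hp)
  have hsplit : schmidtVec a b ((∑ t, w t • x t) * β)
      = ∑ t, w t • schmidtVec a b (x t * β) := by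
    simp only [Finset.sum_mul, smul_mul_assoc, map_sum, map_smul]
  have hnorm (t : T) : ‖WithLp.toLp 2 (schmidtVec a b (x t * β))‖ ^ 2 = ∑ i, x t i * β i ^ 2 := by
    rw [norm_sq_schmidtVec a hb]
    refine Finset.sum_congr rfl fun i _ => ?_
    rcases (hx t).2 i with h | h <;> simp [h, ha.norm_toLp]
  rw [hsplit]
  calc gammaNorm k (ketBra (∑ t, w t • schmidtVec a b (x t * β))
        (∑ t, w t • schmidtVec a b (x t * β)))
      ≤ (∑ t, ‖WithLp.toLp 2 (w t • schmidtVec a b (x t * β))‖) ^ 2 :=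
        gammaNorm_ketBra_sum_le fun t =>
          (schmidtRankLE_schmidtVec_mul a b (hx t).1 (hx t).2 β).smul (w t)
    _ = (∑ t, w t * ‖WithLp.toLp 2 (schmidtVec a b (x t * β))‖) ^ 2 := by
        simp only [WithLp.toLp_smul, norm_smul, Real.norm_of_nonneg (hw0 _)]
    _ ≤ ∑ t, w t * ‖WithLp.toLp 2 (schmidtVec a b (x t * β))‖ ^ 2 :=
        Real.pow_arith_mean_le_arith_mean_pow _ _ _ (fun t _ => hw0 t) hw1
          (fun _ _ => norm_nonneg _) 2
    _ = ∑ i, (∑ t, w t • x t) i * β i ^ 2 := by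
        simp only [hnorm, Finset.mul_sum, Finset.sum_apply, Pi.smul_apply, smul_eq_mul,
          Finset.sum_mul, mul_assoc]
        exact Finset.sum_comm

theorem sq_sum_mul_le_gammaNorm_mul (ha : Orthonormal' a) (hb : Orthonormal' b) (hk : 1 ≤ k)
    (α β : N → ℝ) {τ : ℝ} (hτ : 0 ≤ τ) :
    (∑ i, β i * α i) ^ 2 ≤ gammaNorm k (ketBra (schmidtVec a b α) (schmidtVec a b α)) *
      (∑ i, max (β i ^ 2 - τ) 0 + k * τ) := by
  have hinner : vinner (schmidtVec a b β) (schmidtVec a b α) = ((∑ i, β i * α i : ℝ) : ℂ) := by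
    simp [vinner_schmidtVec a a hb, vinner_self, ha.norm_toLp]
  calc (∑ i, β i * α i) ^ 2 = ‖vinner (schmidtVec a b β) (schmidtVec a b α)‖ ^ 2 := by
        rw [hinner, Complex.norm_real, Real.norm_eq_abs, sq_abs]
    _ ≤ gammaNorm k (ketBra (schmidtVec a b α) (schmidtVec a b α)) *
          skVecNorm k (schmidtVec a b β) ^ 2 := norm_vinner_sq_le_gammaNorm_ketBra hk _ _
    _ ≤ _ := by
        gcongr
        · exact gammaNorm_nonneg _ _
        · exact skVecNorm_schmidtVec_sq_le ha hb k β hτ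

theorem div_max_mem_cappedCube {N : Type*} [Fintype N] {α : N → ℝ} (hα : ∀ i, 0 ≤ α i) {t : ℝ}
    (ht : 0 ≤ t) (hlevel : ∑ i, min (α i) t = k * t)
    (hcard : (Finset.univ.filter fun i => t < α i).card ≤ k) :
    (fun i => α i / max (α i) t) ∈ cappedCube N k := by
  refine ⟨fun i => ⟨div_nonneg (hα i) (le_max_of_le_right ht),
    div_le_one_of_le₀ (le_max_left _ _) (le_max_of_le_right ht)⟩, ?_⟩
  rcases ht.eq_or_lt with rfl | ht
  · -- Here `0 / 0 = 0`, so the quotients are the indicator of the support of `α`.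
    calc ∑ i, α i / max (α i) 0 = (Finset.univ.filter fun i => 0 < α i).card := by
          rw [Finset.card_filter, Nat.cast_sum]
          refine Finset.sum_congr rfl fun i _ => ?_
          rcases (hα i).eq_or_lt with h | h
          · simp [← h]
          · simp [h, h.le, h.ne']
      _ ≤ k := by exact_mod_cast hcard
  · have hterm (i : N) : α i / max (α i) t = min (α i) t / t := by
      rw [div_eq_div_iff (lt_max_of_lt_right ht).ne' ht.ne', min_mul_max]
    simp only [hterm, ← Finset.sum_div, hlevel, mul_div_cancel_right₀ _ ht.ne', le_refl]

theorem sum_max_mul_eq {N : Type*} [Fintype N] {α : N → ℝ} (hα : ∀ i, 0 ≤ α i) {t : ℝ}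
    (ht : 0 ≤ t) (hlevel : ∑ i, min (α i) t = k * t) :
    ∑ i, max (α i) t * α i = ∑ i, max (α i ^ 2 - t ^ 2) 0 + k * t ^ 2 := by
  have hterm (i : N) : max (α i) t * α i = max (α i ^ 2 - t ^ 2) 0 + min (α i) t * t := by
    rcases le_total (α i) t with h | h
    · rw [max_eq_right h, min_eq_left h,
        max_eq_right (sub_nonpos.2 (pow_le_pow_left₀ (hα i) h 2))]
      ring
    · rw [max_eq_left h, min_eq_right h, max_eq_left (sub_nonneg.2 (pow_le_pow_left₀ ht h 2))]
      ring
  simp only [hterm, Finset.sum_add_distrib, ← Finset.sum_mul, hlevel]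
  ring

theorem gammaNorm_ketBra_schmidtVec (ha : Orthonormal' a) (hb : Orthonormal' b) (hk : 1 ≤ k)
    {α : N → ℝ} (hα : ∀ i, 0 ≤ α i) {t : ℝ} (ht : 0 ≤ t) (hlevel : ∑ i, min (α i) t = k * t)
    (hcard : (Finset.univ.filter fun i => t < α i).card ≤ k) :
    gammaNorm k (ketBra (schmidtVec a b α) (schmidtVec a b α))
      = ∑ i, max (α i ^ 2 - t ^ 2) 0 + k * t ^ 2 := by
  set V := ∑ i, max (α i ^ 2 - t ^ 2) 0 + k * t ^ 2 with hV
  have hβα : ∑ i, max (α i) t * α i = V := sum_max_mul_eq hα ht hlevel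
  have hcancel (i : N) : α i / max (α i) t * max (α i) t = α i :=
    div_mul_cancel_of_imp fun h => (h ▸ le_max_left (α i) t).antisymm (hα i)
  apply le_antisymm
  · have hupper := gammaNorm_ketBra_schmidtVec_mul_le ha hb
      (div_max_mem_cappedCube hα ht hlevel hcard) fun i => max (α i) t
    have hmul : ((fun i => α i / max (α i) t) * fun i => max (α i) t) = α := funext hcancel
    rw [hmul] at hupper
    refine hupper.trans_eq (hβα ▸ Finset.sum_congr rfl fun i _ => ?_)
    rw [sq, ← mul_assoc, hcancel, mul_comm]
  · have hlower := sq_sum_mul_le_gammaNorm_mul ha hb hk α (fun i => max (α i) t) (sq_nonneg t)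
    have hsq (i : N) : max (max (α i) t ^ 2 - t ^ 2) 0 = max (α i ^ 2 - t ^ 2) 0 := by
      rcases le_total (α i) t with h | h
      · simp [h, pow_le_pow_left₀ (hα i) h 2]
      · simp [h]
    simp only [hβα, hsq, ← hV] at hlower
    rcases (show 0 ≤ V by positivity).eq_or_lt with hV0 | hVpos
    · exact hV0 ▸ gammaNorm_nonneg _ _
    · exact le_of_mul_le_mul_right (by rwa [← sq]) hVpos

end WaterLevel

section TailAverage

variable {d k r : ℕ} {α : ℕ → ℝ}

theorem le_tail_average (hrd : r < d) (hrk : r < k) (hα : ∀ i, i < d → 0 ≤ α i)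
    (hrmax : r + 1 < k → α r ≤ (∑ i ∈ Finset.Ico (r + 1) d, α i) / ((k : ℝ) - (r + 1 : ℕ))) :
    α r ≤ (∑ i ∈ Finset.Ico r d, α i) / ((k : ℝ) - r) := by
  have hkr : (0 : ℝ) < k - r := sub_pos.2 (by exact_mod_cast hrk)
  rw [le_div_iff₀ hkr, Finset.sum_eq_sum_Ico_succ_bot hrd]
  rcases (Nat.succ_le_of_lt hrk).eq_or_lt with rfl | hlt
  · have hnonneg : 0 ≤ ∑ i ∈ Finset.Ico (r + 1) d, α i :=
      Finset.sum_nonneg fun i hi => hα i (Finset.mem_Ico.1 hi).2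
    push_cast
    linarith
  · have hmax := hrmax hlt
    rw [le_div_iff₀ (sub_pos.2 (by exact_mod_cast hlt))] at hmax
    push_cast at hmax
    linarith

theorem sum_fin_eq_sum_range_add_sum_Ico {M : Type*} [AddCommMonoid M] (hrd : r ≤ d)
    {f g h : ℕ → M} (hg : ∀ i < r, f i = g i) (hh : ∀ i, r ≤ i → i < d → f i = h i) :
    ∑ i : Fin d, f i = ∑ i ∈ Finset.range r, g i + ∑ i ∈ Finset.Ico r d, h i := by
  rw [← Finset.sum_range f, ← Finset.sum_range_add_sum_Ico f hrd]
  congr 1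
  · exact Finset.sum_congr rfl fun i hi => hg i (Finset.mem_range.1 hi)
  · exact Finset.sum_congr rfl fun i hi => hh i (Finset.mem_Ico.1 hi).1 (Finset.mem_Ico.1 hi).2

theorem gammaNorm_ketBra_schmidtVec_fin {t : ℝ} {a : Fin d → ι → ℂ} {b : Fin d → κ → ℂ}
    (ha : Orthonormal' a) (hb : Orthonormal' b) (hrk : r < k) (hrd : r ≤ d)
    (hα : ∀ i, i < d → 0 ≤ α i) (ht : 0 ≤ t) (htail : ∑ i ∈ Finset.Ico r d, α i = (k - r) * t)
    (hhead : ∀ i < r, t ≤ α i) (hlow : ∀ i, r ≤ i → i < d → α i ≤ t) :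
    gammaNorm k (ketBra (schmidtVec a b fun i => α i) (schmidtVec a b fun i => α i))
      = ∑ i ∈ Finset.range r, α i ^ 2 + (k - r) * t ^ 2 := by
  have hlevel : ∑ i : Fin d, min (α i) t = k * t := by
    rw [sum_fin_eq_sum_range_add_sum_Ico hrd (f := fun i => min (α i) t) (g := fun _ => t) (h := α)
      (fun i hi => min_eq_right (hhead i hi)) fun i hri hi => min_eq_left (hlow i hri hi), htail]
    simp only [Finset.sum_const, Finset.card_range, nsmul_eq_mul]
    ring
  have hcard : (Finset.univ.filter fun i : Fin d => t < α i).card ≤ k := by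
    calc (Finset.univ.filter fun i : Fin d => t < α i).card ≤ (Finset.range r).card :=
          Finset.card_le_card_of_injOn Fin.val
            (fun i hi => by
              have hi' : t < α i := by simpa using hi
              by_contra hri
              exact (hlow i (by simpa using hri) i.2).not_gt hi')
            Fin.val_injective.injOn
      _ ≤ k := by simpa using hrk.le
  rw [gammaNorm_ketBra_schmidtVec ha hb (Nat.one_le_of_lt hrk) (fun i => hα i i.2) ht hlevel hcard,
    sum_fin_eq_sum_range_add_sum_Ico hrd (f := fun i => max (α i ^ 2 - t ^ 2) 0)
      (g := fun i => α i ^ 2 - t ^ 2) (h := 0)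
      (fun i hi => max_eq_left (sub_nonneg.2 (pow_le_pow_left₀ ht (hhead i hi) 2)))
      fun i hri hi => max_eq_right (sub_nonpos.2 (pow_le_pow_left₀ (hα i hi) (hlow i hri hi) 2))]
  simp only [Finset.sum_sub_distrib, Finset.sum_const, Finset.card_range, nsmul_eq_mul,
    Pi.zero_apply, smul_zero]
  ring

end TailAverage

theorem gammaNorm_of_pure_general {d k : ℕ} (hk : k ≤ d) (v : ι × κ → ℂ) (α : ℕ → ℝ) (a : ℕ → ι → ℂ)
    (b : ℕ → κ → ℂ) (hα0 : ∀ i, i < d → 0 ≤ α i) (hαmono : ∀ i j, i ≤ j → j < d → α j ≤ α i)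
    (ha : ∀ i j, i < d → j < d → vinner (a i) (a j) = if i = j then 1 else 0)
    (hb : ∀ i j, i < d → j < d → vinner (b i) (b j) = if i = j then 1 else 0)
    (hdec : v = ∑ i ∈ Finset.range d, α i • prodVec (a i) (b i)) (r : ℕ) (hrk : r < k)
    (hr : 1 ≤ r → (∑ i ∈ Finset.Ico r d, α i) / ((k : ℝ) - r) < α (r - 1))
    (hrmax : ∀ j, r < j → j < k → ¬ ((∑ i ∈ Finset.Ico j d, α i) / ((k : ℝ) - j) < α (j - 1))) :
    gammaNorm k (ketBra v v) =
      (∑ i ∈ Finset.range r, α i ^ 2) +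
        ((k : ℝ) - r) * ((∑ i ∈ Finset.Ico r d, α i) / ((k : ℝ) - r)) ^ 2 := by
  set t := (∑ i ∈ Finset.Ico r d, α i) / ((k : ℝ) - r)
  have hrd : r < d := hrk.trans_le hk
  have hkr : (0 : ℝ) < k - r := sub_pos.2 (by exact_mod_cast hrk)
  have hrt : α r ≤ t := le_tail_average hrd hrk hα0 fun hlt => not_lt.1 (hrmax _ r.lt_succ_self hlt)
  have hhead (i : ℕ) (hi : i < r) : t ≤ α i :=
    (hr (by lia)).le.trans (hαmono i (r - 1) (by lia) (by lia))
  have hv : v = schmidtVec (fun i : Fin d => a i) (fun i => b i) fun i => α i := by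
    rw [hdec, schmidtVec_apply, Finset.sum_range]
  rw [hv]
  exact gammaNorm_ketBra_schmidtVec_fin
    (fun i j => by simpa only [Fin.ext_iff] using ha i j i.2 j.2)
    (fun i j => by simpa only [Fin.ext_iff] using hb i j i.2 j.2) hrk hrd.le hα0
    ((hα0 r hrd).trans hrt) (mul_div_cancel₀ _ hkr.ne').symm hhead
    fun i hri hi => (hαmono r i hri hi).trans hrt

/-- for a unit vector `v` with Schmidt coefficients
`α 0 ≥ α 1 ≥ ⋯ ≥ α (min m n - 1) ≥ 0` (presented via a Schmidt decomposition; the 0-based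
`α i` is the paper's `α_{i+1}`), with `r` the largest index with `1 ≤ r < k` such that
`α_r > (Σ_{i=r+1}^{min(m,n)} α_i)/(k-r)` (`r = 0` if no such index exists) and
`α̃ := (Σ_{i=r+1}^{min(m,n)} α_i)/(k-r)`, we have
`‖|v⟩⟨v|‖_{γ,k} = Σ_{i=1}^r α_i² + (k-r)·α̃²`. -/
theorem gammaNorm_of_pure {m n k : ℕ} (hk1 : 1 ≤ k) (hk : k ≤ min m n)
    (v : Fin m × Fin n → ℂ) (hv : vinner v v = 1)
    (α : ℕ → ℝ) (a : ℕ → Fin m → ℂ) (b : ℕ → Fin n → ℂ)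
    (hα0 : ∀ i, i < min m n → 0 ≤ α i)
    (hαmono : ∀ i j, i ≤ j → j < min m n → α j ≤ α i)
    (ha : ∀ i j, i < min m n → j < min m n → vinner (a i) (a j) = if i = j then 1 else 0)
    (hb : ∀ i j, i < min m n → j < min m n → vinner (b i) (b j) = if i = j then 1 else 0)
    (hdec : v = ∑ i ∈ Finset.range (min m n), α i • prodVec (a i) (b i))
    (r : ℕ) (hrk : r < k)
    (hr : 1 ≤ r → (∑ i ∈ Finset.Ico r (min m n), α i) / ((k : ℝ) - r) < α (r - 1))
    (hrmax : ∀ j, r < j → j < k →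
      ¬ ((∑ i ∈ Finset.Ico j (min m n), α i) / ((k : ℝ) - j) < α (j - 1))) :
    gammaNorm k (ketBra v v) =
      (∑ i ∈ Finset.range r, α i ^ 2) +
        ((k : ℝ) - r) * ((∑ i ∈ Finset.Ico r (min m n), α i) / ((k : ℝ) - r)) ^ 2 := by
  exact gammaNorm_of_pure_general hk v α a b hα0 hαmono ha hb hdec r hrk hr hrmax

end Ent
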